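/- arXiv:1204.2436 — 7 statements merged into one kernel-verified Lean document; each statement's English description precedes it below -/
import Mathlib

section
/- Let M be an m×n entrywise nonnegative real matrix and Q an invertible n×n real matrix whose inverse Q⁻¹ is entrywise nonnegative, and set M' = MQ. Then for any entrywise nonnegative matrices U ∈ ℝ^{m×r} and V' ∈ ℝ^{r×n}, the matrix V = V'Q⁻¹ is entrywise nonnegative and ‖M − UV‖_F ≤ ‖M' − UV'‖_F · ‖Q⁻¹‖₂, where ‖·‖_F is the Frobenius norm and ‖·‖₂ is the spectral (operator 2-) norm. In particular, if M' = UV' exactly then M = UV exactly. -/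
open Matrix BigOperators

/-- The column `j` of `M` normalized to unit ℓ₁-norm. -/
noncomputable def normCol {m n : ℕ} (M : Matrix (Fin m) (Fin n) ℝ) (j : Fin n) : Fin m → ℝ :=
  (∑ i, |M i j|)⁻¹ • fun i => M i j

/-- Column `j` of `M` is nonzero. -/
def colNZ {m n : ℕ} (M : Matrix (Fin m) (Fin n) ℝ) (j : Fin n) : Prop :=
  (fun i => M i j) ≠ 0

/-- `θ(M)`: the set of ℓ₁-normalized nonzero columns of `M`. -/
noncomputable def thetaCols {m n : ℕ} (M : Matrix (Fin m) (Fin n) ℝ) : Set (Fin m → ℝ) :=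
  {x | ∃ j, colNZ M j ∧ x = normCol M j}

/-- The nonnegative rank of `M`. -/
noncomputable def nnRank {m n : ℕ} (M : Matrix (Fin m) (Fin n) ℝ) : ℕ :=
  sInf {r : ℕ | ∃ U : Matrix (Fin m) (Fin r) ℝ, ∃ V : Matrix (Fin r) (Fin n) ℝ,
    (∀ i j, 0 ≤ U i j) ∧ (∀ i j, 0 ≤ V i j) ∧ M = U * V}

/-- The squared Frobenius norm. -/
noncomputable def frobSq {m n : ℕ} (A : Matrix (Fin m) (Fin n) ℝ) : ℝ :=
  ∑ i, ∑ j, (A i j) ^ 2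

/-- Feasibility for problem (tigrel): `B ≥ 0`, zero diagonal, `MB ≤ M` entrywise. -/
def TigrelFeasible {m n : ℕ} (M : Matrix (Fin m) (Fin n) ℝ)
    (B : Matrix (Fin n) (Fin n) ℝ) : Prop :=
  (∀ i j, 0 ≤ B i j) ∧ (∀ i, B i i = 0) ∧ ∀ i j, (M * B) i j ≤ M i j

/-- Optimality for problem (tigrel): feasible and minimizes `‖M - MB‖_F²`. -/
def TigrelOpt {m n : ℕ} (M : Matrix (Fin m) (Fin n) ℝ)
    (B : Matrix (Fin n) (Fin n) ℝ) : Prop :=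
  TigrelFeasible M B ∧
    ∀ B', TigrelFeasible M B' → frobSq (M - M * B) ≤ frobSq (M - M * B')

/-- A monomial matrix: permutation of a diagonal matrix with positive diagonal. -/
def IsMonomial {k : ℕ} (P : Matrix (Fin k) (Fin k) ℝ) : Prop :=
  ∃ (σ : Equiv.Perm (Fin k)) (d : Fin k → ℝ), (∀ i, 0 < d i) ∧
    ∀ i j, P i j = if i = σ j then d j else 0

/-- Every extreme point of `conv(θ(M))` equals `θ(M_{:j})` for exactly one column `j`. -/
def NonRepeatedVertices {m n : ℕ} (M : Matrix (Fin m) (Fin n) ℝ) : Prop :=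
  ∀ x ∈ Set.extremePoints ℝ (convexHull ℝ (thetaCols M)),
    ∃! j : Fin n, colNZ M j ∧ x = normCol M j

/-- Uniqueness of size-`r` exact NMF up to permutation and scaling. -/
def UniqueNMF {m n : ℕ} (r : ℕ) (M : Matrix (Fin m) (Fin n) ℝ) : Prop :=
  ∀ (U₁ U₂ : Matrix (Fin m) (Fin r) ℝ) (V₁ V₂ : Matrix (Fin r) (Fin n) ℝ),
    (∀ i j, 0 ≤ U₁ i j) → (∀ i j, 0 ≤ V₁ i j) →
    (∀ i j, 0 ≤ U₂ i j) → (∀ i j, 0 ≤ V₂ i j) →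
    M = U₁ * V₁ → M = U₂ * V₂ →
    ∃ P : Matrix (Fin r) (Fin r) ℝ, IsMonomial P ∧ U₂ = U₁ * P ∧ V₂ = P⁻¹ * V₁

/-- Separability of a factorization, expressed as a property of the right factor `V`. -/
def SeparableFactor {r n : ℕ} (V : Matrix (Fin r) (Fin n) ℝ) : Prop :=
  ∀ i : Fin r, ∃ j : Fin n, V i j ≠ 0 ∧ ∀ i' : Fin r, i' ≠ i → V i' j = 0

/-- The Frobenius norm. -/
noncomputable def frobNorm {m n : ℕ} (A : Matrix (Fin m) (Fin n) ℝ) : ℝ :=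
  Real.sqrt (∑ i, ∑ j, (A i j) ^ 2)

/-- The Euclidean (ℓ₂) norm of a vector. -/
noncomputable def vecNorm2 {n : ℕ} (x : Fin n → ℝ) : ℝ :=
  Real.sqrt (∑ i, (x i) ^ 2)

/-- The spectral (operator 2-) norm of a matrix. -/
noncomputable def specNorm {m n : ℕ} (A : Matrix (Fin m) (Fin n) ℝ) : ℝ :=
  sSup {c : ℝ | ∃ x : Fin n → ℝ, vecNorm2 x ≤ 1 ∧ c = vecNorm2 (A.mulVec x)}

/-!
Since `M = M' Q⁻¹`, the residual transforms by the same right factor: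
`M - U V' Q⁻¹ = (M' - U V') Q⁻¹`. Right multiplication by a matrix `B` scales each row by at most
`‖Bᵀ‖₂ = ‖B‖₂`, hence the Frobenius norm, whose square is the sum of the squared row norms, by at
most the same factor.
-/

theorem matrix_mul_apply_nonneg {l m n R : Type*} [Fintype m] [NonUnitalNonAssocSemiring R]
    [PartialOrder R] [IsOrderedAddMonoid R] [PosMulMono R] {A : Matrix l m R} {B : Matrix m n R}
    (hA : ∀ i j, 0 ≤ A i j) (hB : ∀ i j, 0 ≤ B i j) (i : l) (j : n) : 0 ≤ (A * B) i j :=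
  Finset.sum_nonneg fun k _ => mul_nonneg (hA i k) (hB k j)

section L2OpNorm

open WithLp
open scoped Matrix.Norms.L2Operator

section RCLike

variable {𝕜 l m n : Type*} [RCLike 𝕜] [Fintype l] [Fintype m] [Fintype n] [DecidableEq n]

theorem norm_toLp_star (x : m → 𝕜) : ‖toLp 2 (star x)‖ = ‖toLp 2 x‖ := by
  simp only [EuclideanSpace.norm_eq, Pi.star_apply, norm_star]

theorem norm_toLp_vecMul_le (x : m → 𝕜) (A : Matrix m n 𝕜) :
    ‖toLp 2 (x ᵥ* A)‖ ≤ ‖toLp 2 x‖ * ‖A‖ := by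
  classical
  calc ‖toLp 2 (x ᵥ* A)‖ = ‖toLp 2 (Aᴴ *ᵥ star x)‖ := by
        rw [← norm_toLp_star, star_vecMul]
    _ ≤ ‖Aᴴ‖ * ‖toLp 2 (star x)‖ := l2_opNorm_mulVec Aᴴ (toLp 2 (star x))
    _ = ‖toLp 2 x‖ * ‖A‖ := by rw [l2_opNorm_conjTranspose, norm_toLp_star, mul_comm]

theorem norm_toLp_sq (x : m → 𝕜) : ‖toLp 2 x‖ ^ 2 = ∑ i, ‖x i‖ ^ 2 :=
  EuclideanSpace.norm_sq_eq (toLp 2 x)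

theorem sum_sum_norm_sq_mul_le (A : Matrix l m 𝕜) (B : Matrix m n 𝕜) :
    ∑ i, ∑ j, ‖(A * B) i j‖ ^ 2 ≤ (∑ i, ∑ j, ‖A i j‖ ^ 2) * ‖B‖ ^ 2 := by
  rw [Finset.sum_mul]
  refine Finset.sum_le_sum fun i _ => ?_
  calc ∑ j, ‖(A * B) i j‖ ^ 2 = ‖toLp 2 (A i ᵥ* B)‖ ^ 2 := (norm_toLp_sq (A i ᵥ* B)).symm
    _ ≤ (‖toLp 2 (A i)‖ * ‖B‖) ^ 2 := by gcongr; exact norm_toLp_vecMul_le (A i) B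
    _ = (∑ j, ‖A i j‖ ^ 2) * ‖B‖ ^ 2 := by rw [mul_pow, norm_toLp_sq]

end RCLike

variable {l m n : ℕ}

theorem vecNorm2_eq_norm_toLp (x : Fin n → ℝ) : vecNorm2 x = ‖toLp 2 x‖ := by
  simp only [vecNorm2, EuclideanSpace.norm_eq, Real.norm_eq_abs, sq_abs]

theorem specNorm_eq_l2_opNorm (A : Matrix (Fin m) (Fin n) ℝ) : specNorm A = ‖A‖ := by
  rw [specNorm, l2_opNorm_def, ← ContinuousLinearMap.sSup_unitClosedBall_eq_norm]
  congr 1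
  ext c
  simp only [Set.mem_ofPred_eq, Set.mem_image, Metric.mem_closedBall, dist_zero_right,
    vecNorm2_eq_norm_toLp]
  constructor
  · rintro ⟨x, hx, rfl⟩
    exact ⟨toLp 2 x, hx, rfl⟩
  · rintro ⟨x, hx, rfl⟩
    exact ⟨ofLp x, hx, rfl⟩

theorem frobNorm_mul_le (A : Matrix (Fin l) (Fin m) ℝ) (B : Matrix (Fin m) (Fin n) ℝ) :
    frobNorm (A * B) ≤ frobNorm A * specNorm B := by
  have hsq : ∑ i, ∑ j, (A * B) i j ^ 2 ≤ (∑ i, ∑ j, A i j ^ 2) * ‖B‖ ^ 2 := by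
    simpa only [Real.norm_eq_abs, sq_abs] using sum_sum_norm_sq_mul_le A B
  calc frobNorm (A * B) ≤ √((∑ i, ∑ j, A i j ^ 2) * ‖B‖ ^ 2) := Real.sqrt_le_sqrt hsq
    _ = frobNorm A * specNorm B := by
      rw [Real.sqrt_mul (by positivity), Real.sqrt_sq (norm_nonneg B), specNorm_eq_l2_opNorm,
        frobNorm]

end L2OpNorm

theorem stmt0_general {m n p r : ℕ} (M : Matrix (Fin m) (Fin n) ℝ)
    (Q : Matrix (Fin n) (Fin p) ℝ) (P : Matrix (Fin p) (Fin n) ℝ) (hQP : Q * P = 1)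
    (hP : ∀ i j, 0 ≤ P i j) (M' : Matrix (Fin m) (Fin p) ℝ) (hM' : M' = M * Q)
    (U : Matrix (Fin m) (Fin r) ℝ) (V' : Matrix (Fin r) (Fin p) ℝ) (hV' : ∀ i j, 0 ≤ V' i j) :
    (∀ i j, 0 ≤ (V' * P) i j) ∧
    frobNorm (M - U * (V' * P)) ≤ frobNorm (M' - U * V') * specNorm P ∧
    (M' = U * V' → M = U * (V' * P)) := by
  have hM : M = M' * P := by rw [hM', Matrix.mul_assoc, hQP, Matrix.mul_one]
  have hres : M - U * (V' * P) = (M' - U * V') * P := by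
    rw [Matrix.sub_mul, ← hM, Matrix.mul_assoc]
  refine ⟨matrix_mul_apply_nonneg hV' hP, ?_, fun hexact => ?_⟩
  · rw [hres]
    exact frobNorm_mul_le _ P
  · rw [hM, hexact, Matrix.mul_assoc]

/-- If `Q` is inverse positive and `M' = MQ`, then for nonnegative `U, V'`,
`V = V'Q⁻¹` is nonnegative, `‖M − UV‖_F ≤ ‖M' − UV'‖_F ⬝ ‖Q⁻¹‖₂`, and an exact
factorization of `M'` yields an exact factorization of `M`. -/
theorem stmt0 {m n r : ℕ} (M : Matrix (Fin m) (Fin n) ℝ) (Q : Matrix (Fin n) (Fin n) ℝ)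
    (hM : ∀ i j, 0 ≤ M i j) (hQ : IsUnit Q.det) (hQinv : ∀ i j, 0 ≤ Q⁻¹ i j)
    (M' : Matrix (Fin m) (Fin n) ℝ) (hM' : M' = M * Q)
    (U : Matrix (Fin m) (Fin r) ℝ) (V' : Matrix (Fin r) (Fin n) ℝ)
    (hU : ∀ i j, 0 ≤ U i j) (hV' : ∀ i j, 0 ≤ V' i j) :
    (∀ i j, 0 ≤ (V' * Q⁻¹) i j) ∧
    frobNorm (M - U * (V' * Q⁻¹)) ≤ frobNorm (M' - U * V') * specNorm Q⁻¹ ∧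
    (M' = U * V' → M = U * (V' * Q⁻¹)) :=
  stmt0_general M Q Q⁻¹ (Q.mul_nonsing_inv hQ) hQinv M' hM' U V' hV'
end

section
/- Let M ∈ ℝ^{m×n} be entrywise nonnegative with no all-zero column and with r = rank(M) = rank₊(M). If r columns of θ(M) coincide with r distinct extreme points of Δ^m ∩ col(θ(M)), where col(θ(M)) denotes the linear span of the columns of θ(M), then the exact NMF of M of size r is unique up to permutation and scaling: for any two factorizations M = U₁V₁ = U₂V₂ with U₁, U₂ ∈ ℝ^{m×r} and V₁, V₂ ∈ ℝ^{r×n} all entrywise nonnegative, there exists a monomial matrix P with U₂ = U₁P and V₂ = P⁻¹V₁. -/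
open Matrix BigOperators

/-!
Extreme points of `Δ ∩ S` are extreme rays of the cone of nonnegative vectors of `S`: a summand of
such a point inside the cone is a multiple of it. If `M = UV` with `U, V ≥ 0` and `U` has
`rank M` columns, these columns span `col(M)`, so each normalized column of `M` is a sum of vectors
of the cone proportional to columns of `U`, and if it is extreme it is itself proportional to a
column of `U`. Thus the `r` given extreme points are the columns of `U` up to permutation and
scaling. They depend only on `M`, so any two left factors differ by a monomial matrix, and
injectivity of `U` carries this over to the right factors.
-/

section ExtremePoints

variable {𝕜 ι κ : Type*} [Field 𝕜] [LinearOrder 𝕜] [IsStrictOrderedRing 𝕜] [Fintype ι]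
  {S : Submodule 𝕜 (ι → 𝕜)}

theorem eq_sum_smul_of_le_of_mem_extremePoints {x y : ι → 𝕜}
    (hx : x ∈ Set.extremePoints 𝕜 (stdSimplex 𝕜 ι ∩ S)) (hyS : y ∈ S) (hy : 0 ≤ y)
    (hyx : y ≤ x) : y = (∑ i, y i) • x := by
  obtain ⟨⟨⟨hx_nonneg, hx_sum⟩, hxS⟩, hx_extreme⟩ := hx
  set t := ∑ i, y i with ht
  have ht_nonneg : 0 ≤ t := Finset.sum_nonneg fun i _ => hy i
  have ht_le : t ≤ 1 := hx_sum ▸ Finset.sum_le_sum fun i _ => hyx i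
  -- `x` is the midpoint of `x + z` and `x - z`, both of which lie in the section of the simplex.
  let z := y - t • x
  have hzS : z ∈ S := S.sub_mem hyS (S.smul_mem t hxS)
  have hz_sum : ∑ i, z i = 0 := by
    simp [z, Finset.sum_sub_distrib, ← Finset.mul_sum, hx_sum, ← ht]
  have h_add : x + z ∈ stdSimplex 𝕜 ι ∩ S := by
    refine ⟨⟨fun i => ?_, ?_⟩, S.add_mem hxS hzS⟩
    · calc 0 ≤ (1 - t) * x i + y i :=
            add_nonneg (mul_nonneg (sub_nonneg.2 ht_le) (hx_nonneg i)) (hy i)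
        _ = (x + z) i := by
            simp only [z, Pi.add_apply, Pi.sub_apply, Pi.smul_apply, smul_eq_mul]
            ring
    · simp [Finset.sum_add_distrib, hx_sum, hz_sum]
  have h_sub : x - z ∈ stdSimplex 𝕜 ι ∩ S := by
    refine ⟨⟨fun i => ?_, ?_⟩, S.sub_mem hxS hzS⟩
    · calc 0 ≤ t * x i + (x i - y i) :=
            add_nonneg (mul_nonneg ht_nonneg (hx_nonneg i)) (sub_nonneg.2 (hyx i))
        _ = (x - z) i := by
            simp only [z, Pi.sub_apply, Pi.smul_apply, smul_eq_mul]
            ring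
    · simp [Finset.sum_sub_distrib, hx_sum, hz_sum]
  have h_eq : x + z = x := hx_extreme h_add h_sub (mem_openSegment_add_sub x z)
  exact sub_eq_zero.1 (add_eq_left.1 h_eq)

theorem exists_col_eq_smul_of_mulVec_mem_extremePoints [Fintype κ] {U : Matrix ι κ 𝕜} {w : κ → 𝕜}
    (hU : ∀ i l, 0 ≤ U i l) (hw : ∀ l, 0 ≤ w l) (hUS : ∀ l, U.col l ∈ S)
    (hx : U *ᵥ w ∈ Set.extremePoints 𝕜 (stdSimplex 𝕜 ι ∩ S)) :
    ∃ l, ∃ c : 𝕜, 0 < c ∧ U.col l = c • U *ᵥ w := by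
  have h_sum : U *ᵥ w = ∑ l, w l • U.col l := by simp [mulVec_eq_sum, col]
  have h_nonneg (l : κ) : 0 ≤ w l • U.col l := smul_nonneg (hw l) fun i => hU i l
  have h_ne : U *ᵥ w ≠ 0 := by
    intro h
    simpa [h] using hx.1.1.2
  obtain ⟨l, -, hl⟩ := Finset.exists_ne_zero_of_sum_ne_zero (h_sum ▸ h_ne)
  have h_le : w l • U.col l ≤ U *ᵥ w :=
    h_sum ▸ Finset.single_le_sum (fun l _ => h_nonneg l) (Finset.mem_univ l)
  have h_smul := eq_sum_smul_of_le_of_mem_extremePoints hx (S.smul_mem (w l) (hUS l)) (h_nonneg l)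
    h_le
  set t := ∑ i, (w l • U.col l) i
  have ht : 0 < t := by
    refine (Finset.sum_nonneg fun i _ => h_nonneg l i).lt_of_ne' fun h : t = 0 => hl ?_
    rw [h_smul, h, zero_smul]
  have hwl : 0 < w l := (hw l).lt_of_ne' fun h => hl (by rw [h, zero_smul])
  refine ⟨l, (w l)⁻¹ * t, by positivity, ?_⟩
  rw [mul_smul, ← h_smul, inv_smul_smul₀ hwl.ne']

end ExtremePoints

section Rank

variable {𝕜 R ι κ ν : Type*} [Field 𝕜] [CommSemiring R] [Fintype κ]

theorem span_range_col_mul_of_rank_eq [Finite ι] [Fintype ν] {A : Matrix ι κ 𝕜} {B : Matrix κ ν 𝕜}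
    (h : (A * B).rank = A.rank) :
    Submodule.span 𝕜 (Set.range (A * B).col) = Submodule.span 𝕜 (Set.range A.col) := by
  rw [← range_mulVecLin, ← range_mulVecLin]
  refine Submodule.eq_of_le_of_finrank_eq ?_ h
  rw [mulVecLin_mul]
  exact LinearMap.range_comp_le_range _ _

theorem rank_eq_card_of_rank_mul_eq_card [StrongRankCondition R] [Fintype ν] {A : Matrix ι κ R}
    {B : Matrix κ ν R} (h : (A * B).rank = Fintype.card κ) : A.rank = Fintype.card κ :=
  A.rank_le_card_width.antisymm (h ▸ rank_mul_le_left A B)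

theorem mul_right_injective_of_rank_eq_card [Nontrivial R] [OrzechProperty R] {A : Matrix ι κ R}
    (h : A.rank = Fintype.card κ) : Function.Injective fun B : Matrix κ ν R => A * B := by
  have h_mulVec : Function.Injective A.mulVec := by
    rw [mulVec_injective_iff, linearIndependent_iff_card_eq_finrank_span, ← h,
      rank_eq_finrank_span_cols, Set.finrank]
  intro B C hBC
  ext k j
  exact congrFun (h_mulVec (congrArg (fun D : Matrix ι ν R => D.col j) hBC)) k

end Rank

section Monomial

variable {ι : Type*} {k : ℕ}

theorem IsMonomial.mul {P Q : Matrix (Fin k) (Fin k) ℝ} (hP : IsMonomial P) (hQ : IsMonomial Q) :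
    IsMonomial (P * Q) := by
  obtain ⟨σ, d, hd, hP⟩ := hP
  obtain ⟨τ, e, he, hQ⟩ := hQ
  refine ⟨σ * τ, fun j => d (τ j) * e j, fun j => mul_pos (hd _) (he j), fun i j => ?_⟩
  calc (P * Q) i j = P i (τ j) * e j := by simp [mul_apply, hQ]
    _ = if i = σ (τ j) then d (τ j) * e j else 0 := by rw [hP, ite_mul, zero_mul]

theorem IsMonomial.exists_isMonomial_mul_eq_one {P : Matrix (Fin k) (Fin k) ℝ}
    (hP : IsMonomial P) : ∃ Q : Matrix (Fin k) (Fin k) ℝ, IsMonomial Q ∧ P * Q = 1 := by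
  obtain ⟨σ, d, hd, hP⟩ := hP
  refine ⟨of fun i j => if i = σ.symm j then (d (σ.symm j))⁻¹ else 0,
    ⟨σ.symm, fun j => (d (σ.symm j))⁻¹, fun j => inv_pos.2 (hd _), fun _ _ => rfl⟩, ?_⟩
  ext i j
  simp [mul_apply, hP, one_apply, (hd _).ne']

theorem IsMonomial.isUnit_det {P : Matrix (Fin k) (Fin k) ℝ} (hP : IsMonomial P) :
    IsUnit P.det :=
  let ⟨_, _, h⟩ := hP.exists_isMonomial_mul_eq_one
  isUnit_det_of_right_inverse h

theorem IsMonomial.inv {P : Matrix (Fin k) (Fin k) ℝ} (hP : IsMonomial P) : IsMonomial P⁻¹ := by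
  obtain ⟨Q, hQ, h⟩ := hP.exists_isMonomial_mul_eq_one
  rwa [inv_eq_right_inv h]

theorem exists_isMonomial_mul_eq [Fintype ι] {U X : Matrix ι (Fin k) ℝ}
    (hX_sum : ∀ j, ∑ i, X i j = 1) (hX_inj : Function.Injective X.col)
    (h : ∀ j, ∃ l, ∃ c : ℝ, 0 < c ∧ U.col l = c • X.col j) :
    ∃ Q : Matrix (Fin k) (Fin k) ℝ, IsMonomial Q ∧ U * Q = X := by
  choose σ c hc hσ using h
  have hU (i : ι) (j : Fin k) : U i (σ j) = c j * X i j := congrFun (hσ j) i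
  have hc_sum (j : Fin k) : c j = ∑ i, U i (σ j) := by
    simp only [hU, ← Finset.mul_sum, hX_sum, mul_one]
  have hσ_inj : Function.Injective σ := by
    intro j j' hj
    have hcc : c j = c j' := by rw [hc_sum, hc_sum, hj]
    exact hX_inj <| smul_right_injective _ (hc j).ne' <|
      calc c j • X.col j = U.col (σ j) := (hσ j).symm
        _ = c j • X.col j' := by rw [hj, hσ, hcc]
  let τ := Equiv.ofBijective σ (Finite.injective_iff_bijective.1 hσ_inj)
  refine ⟨of fun i j => if i = τ j then (c j)⁻¹ else 0,
    ⟨τ, fun j => (c j)⁻¹, fun j => inv_pos.2 (hc j), fun _ _ => rfl⟩, ?_⟩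
  ext i j
  calc (U * of fun i j => if i = τ j then (c j)⁻¹ else 0) i j = U i (σ j) * (c j)⁻¹ := by
        simp [mul_apply, τ]
    _ = X i j := by rw [hU, mul_comm, inv_mul_cancel_left₀ (hc j).ne']

end Monomial

section NormalizedColumns

variable {m n r : ℕ}

theorem sum_abs_smul_normCol (M : Matrix (Fin m) (Fin n) ℝ) (j : Fin n) :
    (∑ i, |M i j|) • normCol M j = M.col j := by
  obtain h | h := eq_or_ne (∑ i, |M i j|) 0
  · ext i
    have h_abs : |M i j| = 0 :=
      (Finset.sum_eq_zero_iff_of_nonneg fun i _ => abs_nonneg (M i j)).1 h i (Finset.mem_univ i)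
    simp [h, abs_eq_zero.1 h_abs]
  · exact smul_inv_smul₀ h _

theorem span_thetaCols (M : Matrix (Fin m) (Fin n) ℝ) :
    Submodule.span ℝ (thetaCols M) = Submodule.span ℝ (Set.range M.col) := by
  apply le_antisymm <;> rw [Submodule.span_le]
  · rintro _ ⟨j, -, rfl⟩
    exact Submodule.smul_mem _ _ (Submodule.subset_span ⟨j, rfl⟩)
  · rintro _ ⟨j, rfl⟩
    by_cases hj : colNZ M j
    · rw [← sum_abs_smul_normCol]
      exact Submodule.smul_mem _ _ (Submodule.subset_span ⟨j, hj, rfl⟩)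
    · rw [show M.col j = 0 from not_not.1 hj]
      exact Submodule.zero_mem _

theorem normCol_mul (U : Matrix (Fin m) (Fin r) ℝ) (V : Matrix (Fin r) (Fin n) ℝ) (j : Fin n) :
    normCol (U * V) j = U *ᵥ ((∑ i, |(U * V) i j|)⁻¹ • V.col j) := by
  rw [mulVec_smul]
  rfl

theorem exists_col_eq_smul_normCol {U : Matrix (Fin m) (Fin r) ℝ} {V : Matrix (Fin r) (Fin n) ℝ}
    (hU : ∀ i l, 0 ≤ U i l) (hV : ∀ l j, 0 ≤ V l j) (hrank : (U * V).rank = U.rank) {j : Fin n}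
    (hj : normCol (U * V) j ∈ Set.extremePoints ℝ
      (stdSimplex ℝ (Fin m) ∩ (Submodule.span ℝ (thetaCols (U * V)) : Set (Fin m → ℝ)))) :
    ∃ l, ∃ c : ℝ, 0 < c ∧ U.col l = c • normCol (U * V) j := by
  have h_col (l : Fin r) : U.col l ∈ Submodule.span ℝ (thetaCols (U * V)) := by
    rw [span_thetaCols, span_range_col_mul_of_rank_eq hrank]
    exact Submodule.subset_span ⟨l, rfl⟩
  rw [normCol_mul] at hj ⊢
  exact exists_col_eq_smul_of_mulVec_mem_extremePoints hU
    (fun l => mul_nonneg (inv_nonneg.2 (Finset.sum_nonneg fun _ _ => abs_nonneg _)) (hV l j))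
    h_col hj

theorem exists_isMonomial_mul_eq_normCol {M : Matrix (Fin m) (Fin n) ℝ}
    {U : Matrix (Fin m) (Fin r) ℝ} {V : Matrix (Fin r) (Fin n) ℝ} {f : Fin r → Fin n}
    (hU : ∀ i l, 0 ≤ U i l) (hV : ∀ l j, 0 ≤ V l j) (hUV : M = U * V) (hrank : M.rank = r)
    (hinj : Function.Injective fun k => normCol M (f k))
    (hext : ∀ k, normCol M (f k) ∈ Set.extremePoints ℝ
      (stdSimplex ℝ (Fin m) ∩ (Submodule.span ℝ (thetaCols M) : Set (Fin m → ℝ)))) :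
    ∃ Q : Matrix (Fin r) (Fin r) ℝ, IsMonomial Q ∧ U * Q = of fun i k => normCol M (f k) i := by
  subst hUV
  have hU_rank : U.rank = Fintype.card (Fin r) :=
    rank_eq_card_of_rank_mul_eq_card (hrank.trans (Fintype.card_fin r).symm)
  exact exists_isMonomial_mul_eq (fun k => (hext k).1.1.2) hinj fun k =>
    exists_col_eq_smul_normCol hU hV (by rw [hrank, hU_rank, Fintype.card_fin]) (hext k)

end NormalizedColumns

/-- if `r = rank(M) = rank₊(M)` and `r` columns of `θ(M)` coincide with `r`
distinct extreme points of `Δ^m ∩ col(θ(M))`, then the exact NMF of `M` of size `r`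
is unique up to permutation and scaling. -/
theorem stmt1 {m n r : ℕ} (M : Matrix (Fin m) (Fin n) ℝ)
    (hM : ∀ i j, 0 ≤ M i j) (hnz : ∀ j, colNZ M j)
    (hrank : M.rank = r) (hnnrank : nnRank M = r)
    (f : Fin r → Fin n)
    (hinj : Function.Injective fun k => normCol M (f k))
    (hext : ∀ k, normCol M (f k) ∈ Set.extremePoints ℝ
      (stdSimplex ℝ (Fin m) ∩ (Submodule.span ℝ (thetaCols M) : Set (Fin m → ℝ)))) :
    UniqueNMF r M := by
  intro U₁ U₂ V₁ V₂ hU₁ hV₁ hU₂ hV₂ h₁ h₂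
  obtain ⟨Q₁, hQ₁, hX₁⟩ := exists_isMonomial_mul_eq_normCol hU₁ hV₁ h₁ hrank hinj hext
  obtain ⟨Q₂, hQ₂, hX₂⟩ := exists_isMonomial_mul_eq_normCol hU₂ hV₂ h₂ hrank hinj hext
  have hP : IsMonomial (Q₁ * Q₂⁻¹) := hQ₁.mul hQ₂.inv
  have hU : U₂ = U₁ * (Q₁ * Q₂⁻¹) := by
    rw [← Matrix.mul_assoc, hX₁, ← hX₂, mul_nonsing_inv_cancel_right _ _ hQ₂.isUnit_det]
  have hU₁_rank : U₁.rank = Fintype.card (Fin r) :=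
    rank_eq_card_of_rank_mul_eq_card (B := V₁) (by rw [← h₁, hrank, Fintype.card_fin])
  have hV : Q₁ * Q₂⁻¹ * V₂ = V₁ := mul_right_injective_of_rank_eq_card hU₁_rank <|
    calc U₁ * (Q₁ * Q₂⁻¹ * V₂) = U₂ * V₂ := by rw [← Matrix.mul_assoc, ← hU]
      _ = U₁ * V₁ := h₂.symm.trans h₁
  exact ⟨_, hP, hU, by rw [← hV, nonsing_inv_mul_cancel_left _ _ hP.isUnit_det]⟩
end

section
/- Let M ∈ ℝ^{m×n} be entrywise nonnegative. Then for any two optimal solutions B₁* and B₂* of problem (tigrel) for M, one has MB₁* = MB₂*, i.e., M(I − B₁*) = M(I − B₂*). Hence the preprocessed matrix P(M) is well-defined. -/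
open Matrix BigOperators

/-!
The feasible set of (tigrel) is convex, and its objective is the strictly convex function `‖·‖_F²`
composed with the affine residual map `B ↦ M - MB`. A strictly convex function has at most one
minimiser on a convex set, here the set of residuals, so all optimal `B` share the same residual;
`B` itself need not be unique, as the residual map may fail to be injective.
-/

section ConvexMinimisation

variable {𝕜 E F β : Type*} [Field 𝕜] [LinearOrder 𝕜] [IsStrictOrderedRing 𝕜]
  [AddCommGroup E] [Module 𝕜 E] [AddCommGroup F] [Module 𝕜 F]
  [AddCommMonoid β] [LinearOrder β] [IsOrderedCancelAddMonoid β] [Module 𝕜 β]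
  [PosSMulStrictMono 𝕜 β]

theorem map_eq_of_isMinOn_comp {s : Set E} {t : Set F} {f : F → β} {g : E →ᵃ[𝕜] F} {x y : E}
    (hf : StrictConvexOn 𝕜 t f) (hs : Convex 𝕜 s) (hst : Set.MapsTo g s t)
    (hx : x ∈ s) (hy : y ∈ s) (hfx : IsMinOn (f ∘ g) s x) (hfy : IsMinOn (f ∘ g) s y) :
    g x = g y :=
  (hf.subset hst.image_subset (hs.affine_image g)).eq_of_isMinOn
    (Set.forall_mem_image.2 hfx) (Set.forall_mem_image.2 hfy)
    (Set.mem_image_of_mem g hx) (Set.mem_image_of_mem g hy)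

end ConvexMinimisation

section FrobeniusNorm

variable {m n : ℕ}

theorem frobSq_pos {A : Matrix (Fin m) (Fin n) ℝ} (hA : A ≠ 0) : 0 < frobSq A := by
  have row_nonneg (i : Fin m) : 0 ≤ ∑ j, A i j ^ 2 := Finset.sum_nonneg fun j _ => sq_nonneg _
  obtain ⟨i, j, hij⟩ : ∃ i j, A i j ≠ 0 := by
    by_contra! h
    exact hA (Matrix.ext h)
  have row_pos : 0 < ∑ j, A i j ^ 2 :=
    Finset.sum_pos' (fun j _ => sq_nonneg _) ⟨j, Finset.mem_univ j, sq_pos_of_ne_zero hij⟩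
  exact Finset.sum_pos' (fun i _ => row_nonneg i) ⟨i, Finset.mem_univ i, row_pos⟩

theorem frobSq_smul_add_smul (A B : Matrix (Fin m) (Fin n) ℝ) {a b : ℝ} (hab : a + b = 1) :
    frobSq (a • A + b • B) = a * frobSq A + b * frobSq B - a * b * frobSq (A - B) := by
  obtain rfl : b = 1 - a := eq_sub_of_add_eq' hab
  simp only [frobSq, Finset.mul_sum, ← Finset.sum_add_distrib, ← Finset.sum_sub_distrib,
    Matrix.add_apply, Matrix.sub_apply, Matrix.smul_apply, smul_eq_mul]
  refine Finset.sum_congr rfl fun i _ => Finset.sum_congr rfl fun j _ => ?_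
  ring

theorem strictConvexOn_frobSq :
    StrictConvexOn ℝ Set.univ (frobSq : Matrix (Fin m) (Fin n) ℝ → ℝ) := by
  refine ⟨convex_univ, fun A _ B _ hAB a b ha hb hab => ?_⟩
  have gap_pos : 0 < a * b * frobSq (A - B) :=
    mul_pos (mul_pos ha hb) (frobSq_pos (sub_ne_zero.2 hAB))
  rw [frobSq_smul_add_smul A B hab, smul_eq_mul, smul_eq_mul]
  exact sub_lt_self _ gap_pos

end FrobeniusNorm

section Tigrel

/-- The residual `B ↦ M - MB` as an affine map. Its squared Frobenius norm is the objective of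
(tigrel), and its value at an optimal `B` is the preprocessing `P(M)`. -/
def residualMap {R m n : Type*} [CommRing R] [Fintype n] (M : Matrix m n R) :
    Matrix n n R →ᵃ[R] Matrix m n R :=
  AffineMap.const R _ M - (mulLeftLinearMap n R M).toAffineMap

theorem residualMap_apply {R m n : Type*} [CommRing R] [Fintype n] (M : Matrix m n R)
    (B : Matrix n n R) : residualMap M B = M - M * B :=
  rfl

variable {m n : ℕ}

theorem convex_setOf_tigrelFeasible (M : Matrix (Fin m) (Fin n) ℝ) :
    Convex ℝ {B | TigrelFeasible M B} := by
  rintro B ⟨hB_nonneg, hB_diag, hB_le⟩ C ⟨hC_nonneg, hC_diag, hC_le⟩ a b ha hb hab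
  refine ⟨fun i j => ?_, fun i => ?_, fun i j => ?_⟩
  · exact add_nonneg (mul_nonneg ha (hB_nonneg i j)) (mul_nonneg hb (hC_nonneg i j))
  · simp [hB_diag, hC_diag]
  · calc (M * (a • B + b • C)) i j = a * (M * B) i j + b * (M * C) i j := by
          simp [Matrix.mul_add]
      _ ≤ a * M i j + b * M i j := by gcongr; exacts [hB_le i j, hC_le i j]
      _ = M i j := by rw [← add_mul, hab, one_mul]

variable {M : Matrix (Fin m) (Fin n) ℝ} {B B₁ B₂ : Matrix (Fin n) (Fin n) ℝ}

theorem TigrelOpt.isMinOn (hB : TigrelOpt M B) :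
    IsMinOn (frobSq ∘ residualMap M) {B | TigrelFeasible M B} B :=
  hB.2

theorem TigrelOpt.residualMap_eq (h₁ : TigrelOpt M B₁) (h₂ : TigrelOpt M B₂) :
    residualMap M B₁ = residualMap M B₂ :=
  map_eq_of_isMinOn_comp strictConvexOn_frobSq (convex_setOf_tigrelFeasible M)
    (Set.mapsTo_univ _ _) h₁.1 h₂.1 h₁.isMinOn h₂.isMinOn

end Tigrel

theorem stmt6_general {m n : ℕ} (M : Matrix (Fin m) (Fin n) ℝ) (B₁ B₂ : Matrix (Fin n) (Fin n) ℝ)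
    (h₁ : TigrelOpt M B₁) (h₂ : TigrelOpt M B₂) :
    M * B₁ = M * B₂ ∧ M * (1 - B₁) = M * (1 - B₂) := by
  have residual_eq : M - M * B₁ = M - M * B₂ := by
    simpa only [residualMap_apply] using h₁.residualMap_eq h₂
  refine ⟨sub_right_injective residual_eq, ?_⟩
  simpa only [Matrix.mul_sub, Matrix.mul_one] using residual_eq

/-- the preprocessing is well-defined, i.e. any two optimal solutions of
(tigrel) yield the same matrix `MB`, hence the same `P(M) = M(I − B*)`. -/
theorem stmt6 {m n : ℕ} (M : Matrix (Fin m) (Fin n) ℝ) (hM : ∀ i j, 0 ≤ M i j)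
    (B₁ B₂ : Matrix (Fin n) (Fin n) ℝ)
    (h₁ : TigrelOpt M B₁) (h₂ : TigrelOpt M B₂) :
    M * B₁ = M * B₂ ∧ M * (1 - B₁) = M * (1 - B₂) :=
  stmt6_general M B₁ B₂ h₁ h₂
end

section
/- Let M ∈ ℝ^{m×n} be entrywise nonnegative and P an n×n monomial matrix. Then B is an optimal solution of problem (tigrel) for M if and only if P⁻¹BP is an optimal solution of problem (tigrel) for MP, i.e., B ∈ B*(M) ⇔ P⁻¹BP ∈ B*(MP). Consequently, the preprocessing is invariant to permutation and scaling of the columns: P(MP) = P(M)P. -/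
open Matrix BigOperators

/-!
Writing `b_j` for the `j`-th column of `B`, problem (tigrel) splits into `n` independent problems,
one per column: minimize `‖M_j - M b_j‖²` subject to `b_j ≥ 0`, `(b_j)_j = 0` and `M b_j ≤ M_j`.
Hence the minimizers do not change when the column losses are given arbitrary positive weights.
If `B P = P C` with `P` monomial, then `C` is feasible for `M P` exactly when `B` is feasible for
`M`, and `M P - M P C = (M - M B) P` has the loss of `B` with weights the squared scaling factors
of `P`; this gives the equivalence. The formula for the preprocessing then follows from the
uniqueness of `M B` over the optimal `B`, which is the strict convexity of the squared norm.
-/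

section SeparableMinimization

variable {ι : Type*} [Fintype ι] {α : ι → Type*} {R : Type*} [AddCommMonoid R] [PartialOrder R]
  [IsOrderedCancelAddMonoid R]

theorem isMinOn_sum_pi_iff {s : ∀ i, Set (α i)} {f : ∀ i, α i → R} {x : ∀ i, α i}
    (hx : x ∈ Set.univ.pi s) :
    IsMinOn (fun y => ∑ i, f i (y i)) (Set.univ.pi s) x ↔ ∀ i, IsMinOn (f i) (s i) (x i) := by
  classical
  simp only [isMinOn_iff]
  refine ⟨fun h i b hb => ?_, fun h y hy => Finset.sum_le_sum fun i _ => h i _ (hy i trivial)⟩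
  have hmem : Function.update x i b ∈ Set.univ.pi s :=
    (Set.update_mem_pi_iff_of_mem hx).mpr fun _ => hb
  have hrest : ∑ k ∈ Finset.univ.erase i, f k (Function.update x i b k) =
      ∑ k ∈ Finset.univ.erase i, f k (x k) :=
    Finset.sum_congr rfl fun k hk => by
      rw [Function.update_of_ne (Finset.ne_of_mem_erase hk)]
  have hle := h _ hmem
  rw [← Finset.add_sum_erase _ _ (Finset.mem_univ i),
    ← Finset.add_sum_erase _ (fun k => f k (Function.update x i b k)) (Finset.mem_univ i),
    hrest, Function.update_self] at hle
  exact le_of_add_le_add_right hle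

end SeparableMinimization

section ScaledPermutation

variable {k l m R : Type*} [DecidableEq k] [NonUnitalNonAssocSemiring R]

theorem mul_submatrix_diagonal_apply [Fintype l] (A : Matrix m l R) (σ : k ≃ l) (d : k → R)
    (i : m) (j : k) :
    (A * (diagonal d).submatrix σ.symm id) i j = A i (σ j) * d j := by
  rw [Matrix.mul_apply, Fintype.sum_eq_single (σ j)]
  · simp
  · intro x hx
    simp [diagonal_apply_ne _ (mt σ.symm_apply_eq.mp hx)]

theorem submatrix_diagonal_mul_apply [Fintype k] (σ : k ≃ l) (d : k → R) (A : Matrix k m R)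
    (i : k) (j : m) :
    ((diagonal d).submatrix σ.symm id * A) (σ i) j = d i * A i j := by
  simp [Matrix.mul_apply, diagonal_apply]

end ScaledPermutation

namespace IsMonomial

variable {n : ℕ} {P : Matrix (Fin n) (Fin n) ℝ}

theorem exists_eq_submatrix_diagonal (hP : IsMonomial P) :
    ∃ (σ : Equiv.Perm (Fin n)) (d : Fin n → ℝ),
      (∀ i, 0 < d i) ∧ P = (diagonal d).submatrix σ.symm id := by
  obtain ⟨σ, d, hd, hP⟩ := hP
  refine ⟨σ, d, hd, ?_⟩
  ext i j
  by_cases h : i = σ j <;> simp [hP, Equiv.symm_apply_eq, h]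

theorem isUnit_det_s7 (hP : IsMonomial P) : IsUnit P.det := by
  obtain ⟨σ, d, hd, rfl⟩ := hP.exists_eq_submatrix_diagonal
  rw [← isUnit_iff_isUnit_det]
  have hunit : IsUnit (diagonal d) :=
    isUnit_diagonal.mpr (Pi.isUnit_iff.mpr fun i => (hd i).ne'.isUnit)
  exact (isUnit_submatrix_equiv σ.symm (Equiv.refl _)).mpr hunit

theorem exists_frobSq_mul_eq {m : ℕ} (hP : IsMonomial P) :
    ∃ w : Fin n → ℝ, (∀ j, 0 < w j) ∧
      ∀ A : Matrix (Fin m) (Fin n) ℝ, frobSq (A * P) = ∑ j, w j * ∑ i, A i j ^ 2 := by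
  obtain ⟨σ, d, hd, rfl⟩ := hP.exists_eq_submatrix_diagonal
  refine ⟨fun j => d (σ.symm j) ^ 2, fun j => pow_pos (hd _) 2, fun A => ?_⟩
  calc frobSq (A * (diagonal d).submatrix σ.symm id)
      = ∑ j, ∑ i, (A i (σ j) * d j) ^ 2 := by
        simp only [frobSq, mul_submatrix_diagonal_apply]
        exact Finset.sum_comm
    _ = ∑ j, d (σ.symm (σ j)) ^ 2 * ∑ i, A i (σ j) ^ 2 := by
        simp only [mul_pow, Finset.mul_sum, mul_comm, Equiv.symm_apply_apply]
    _ = ∑ j, d (σ.symm j) ^ 2 * ∑ i, A i j ^ 2 :=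
        Equiv.sum_comp σ fun j => d (σ.symm j) ^ 2 * ∑ i, A i j ^ 2

end IsMonomial

section ColumnProblem

/-- The feasible set of the problem that (tigrel) poses for column `j` of `B`. -/
def tigrelColFeasible {ι κ : Type*} [Fintype κ] (M : Matrix ι κ ℝ) (j : κ) : Set (κ → ℝ) :=
  {b | 0 ≤ b ∧ b j = 0 ∧ M *ᵥ b ≤ M.col j}

/-- The contribution `‖M_j - M b‖²` of column `j` of `B` to the objective of (tigrel), where `b`
is that column. -/
def tigrelColLoss {ι κ : Type*} [Fintype ι] [Fintype κ] (M : Matrix ι κ ℝ) (j : κ)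
    (b : κ → ℝ) : ℝ :=
  ∑ i, (M i j - (M *ᵥ b) i) ^ 2

variable {m n : ℕ} {M : Matrix (Fin m) (Fin n) ℝ} {B : Matrix (Fin n) (Fin n) ℝ}

theorem tigrelFeasible_iff_col_mem_pi :
    TigrelFeasible M B ↔ B.col ∈ Set.univ.pi (tigrelColFeasible M) := by
  constructor
  · exact fun ⟨hnonneg, hdiag, hle⟩ j _ => ⟨fun i => hnonneg i j, hdiag j, fun i => hle i j⟩
  · exact fun h => ⟨fun i j => (h j trivial).1 i, fun j => (h j trivial).2.1,
      fun i j => (h j trivial).2.2 i⟩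

theorem isMinOn_sum_mul_tigrelColLoss_iff {w : Fin n → ℝ} (hw : ∀ j, 0 < w j)
    (hB : TigrelFeasible M B) :
    IsMinOn (fun B' => ∑ j, w j * tigrelColLoss M j (B'.col j)) {B' | TigrelFeasible M B'} B ↔
      ∀ j, IsMinOn (tigrelColLoss M j) (tigrelColFeasible M j) (B.col j) := by
  have hscale (j : Fin n) : IsMinOn (fun b => w j * tigrelColLoss M j b) (tigrelColFeasible M j)
      (B.col j) ↔ IsMinOn (tigrelColLoss M j) (tigrelColFeasible M j) (B.col j) := by
    simp only [isMinOn_iff, mul_le_mul_iff_right₀ (hw j)]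
  rw [← forall_congr' hscale, ← isMinOn_sum_pi_iff (tigrelFeasible_iff_col_mem_pi.mp hB)]
  simp only [isMinOn_iff]
  exact ⟨fun h x hx => h (of x)ᵀ (tigrelFeasible_iff_col_mem_pi.mpr hx),
    fun h B' hB' => h B'.col (tigrelFeasible_iff_col_mem_pi.mp hB')⟩

theorem frobSq_sub_mul_eq_sum_tigrelColLoss (M : Matrix (Fin m) (Fin n) ℝ)
    (B : Matrix (Fin n) (Fin n) ℝ) :
    frobSq (M - M * B) = ∑ j, tigrelColLoss M j (B.col j) :=
  Finset.sum_comm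

theorem tigrelOpt_iff_isMinOn_frobSq_mul {P : Matrix (Fin n) (Fin n) ℝ} (hP : IsMonomial P) :
    TigrelOpt M B ↔ TigrelFeasible M B ∧
      IsMinOn (fun B' => frobSq ((M - M * B') * P)) {B' | TigrelFeasible M B'} B := by
  refine and_congr_right fun hB => ?_
  obtain ⟨w, hw, hfrob⟩ := hP.exists_frobSq_mul_eq (m := m)
  have hunweighted := isMinOn_sum_mul_tigrelColLoss_iff (fun _ => one_pos) hB
  simp only [one_mul, ← frobSq_sub_mul_eq_sum_tigrelColLoss] at hunweighted
  simp only [hfrob]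
  exact hunweighted.trans (isMinOn_sum_mul_tigrelColLoss_iff hw hB).symm

end ColumnProblem

section Intertwining

theorem mul_sub_mul_mul_of_mul_eq_mul {l k k' R : Type*} [Fintype k] [Fintype k']
    [NonUnitalRing R] {M : Matrix l k R} {B : Matrix k k R} {P : Matrix k k' R}
    {C : Matrix k' k' R} (hBC : B * P = P * C) : M * P - M * P * C = (M - M * B) * P := by
  simp only [Matrix.sub_mul, Matrix.mul_assoc, hBC]

variable {m n : ℕ} {M : Matrix (Fin m) (Fin n) ℝ} {P B C : Matrix (Fin n) (Fin n) ℝ}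

theorem tigrelFeasible_mul_iff_of_mul_eq_mul (hP : IsMonomial P) (hBC : B * P = P * C) :
    TigrelFeasible (M * P) C ↔ TigrelFeasible M B := by
  have hMPC : M * P * C = M * B * P := by simp only [Matrix.mul_assoc, hBC]
  obtain ⟨σ, d, hd, rfl⟩ := hP.exists_eq_submatrix_diagonal
  have hentry (i j : Fin n) : B (σ i) (σ j) * d j = d i * C i j := by
    rw [← mul_submatrix_diagonal_apply, hBC, submatrix_diagonal_mul_apply]
  refine and_congr ?nonneg (and_congr ?diag ?le)
  case nonneg =>
    refine σ.forall_congr fun {i} => σ.forall_congr fun {j} => ?_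
    rw [← mul_nonneg_iff_of_pos_left (hd i), ← hentry, mul_nonneg_iff_of_pos_right (hd j)]
  case diag =>
    refine σ.forall_congr fun {i} => ?_
    rw [← mul_eq_zero_iff_left (hd i).ne', ← hentry, mul_eq_zero_iff_right (hd i).ne']
  case le =>
    refine forall_congr' fun i => σ.forall_congr fun {j} => ?_
    rw [hMPC, mul_submatrix_diagonal_apply, mul_submatrix_diagonal_apply,
      mul_le_mul_iff_left₀ (hd j)]

theorem tigrelOpt_mul_iff_of_mul_eq_mul (hP : IsMonomial P) (hBC : B * P = P * C) :
    TigrelOpt (M * P) C ↔ TigrelOpt M B := by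
  rw [tigrelOpt_iff_isMinOn_frobSq_mul (M := M) (B := B) hP]
  refine and_congr (tigrelFeasible_mul_iff_of_mul_eq_mul hP hBC) ?_
  rw [isMinOn_iff, mul_sub_mul_mul_of_mul_eq_mul hBC]
  constructor
  · intro h B' hB'
    have hcomm : B' * P = P * (P⁻¹ * (B' * P)) :=
      (mul_nonsing_inv_cancel_left P _ hP.isUnit_det_s7).symm
    rw [← mul_sub_mul_mul_of_mul_eq_mul hcomm]
    exact h _ ((tigrelFeasible_mul_iff_of_mul_eq_mul hP hcomm).mpr hB')
  · intro h C' hC'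
    have hcomm : P * C' * P⁻¹ * P = P * C' := nonsing_inv_mul_cancel_right P _ hP.isUnit_det_s7
    rw [mul_sub_mul_mul_of_mul_eq_mul hcomm]
    exact h _ ((tigrelFeasible_mul_iff_of_mul_eq_mul hP hcomm).mp hC')

end Intertwining

section Uniqueness

variable {m n : ℕ}

theorem frobSq_nonneg (A : Matrix (Fin m) (Fin n) ℝ) : 0 ≤ frobSq A :=
  Finset.sum_nonneg fun _ _ => Finset.sum_nonneg fun _ _ => sq_nonneg _

theorem frobSq_eq_zero_iff {A : Matrix (Fin m) (Fin n) ℝ} : frobSq A = 0 ↔ A = 0 := by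
  simp [frobSq, Finset.sum_eq_zero_iff_of_nonneg, Finset.sum_nonneg, sq_nonneg, ← Matrix.ext_iff]

theorem frobSq_midpoint (A B : Matrix (Fin m) (Fin n) ℝ) :
    frobSq (midpoint ℝ A B) = (frobSq A + frobSq B) / 2 - frobSq (A - B) / 4 := by
  simp only [frobSq, midpoint_eq_smul_add, ← Finset.sum_add_distrib, Finset.sum_div,
    ← Finset.sum_sub_distrib, Matrix.smul_apply, Matrix.add_apply, Matrix.sub_apply, smul_eq_mul,
    invOf_eq_inv]
  refine Finset.sum_congr rfl fun i _ => Finset.sum_congr rfl fun j _ => ?_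
  ring

theorem TigrelOpt.mul_eq_mul {M : Matrix (Fin m) (Fin n) ℝ} {B C : Matrix (Fin n) (Fin n) ℝ}
    (hB : TigrelOpt M B) (hC : TigrelOpt M C) : M * B = M * C := by
  have hresidual : M - M * midpoint ℝ B C = midpoint ℝ (M - M * B) (M - M * C) := by
    simp only [midpoint_eq_smul_add, Matrix.mul_smul, Matrix.mul_add, invOf_eq_inv]
    module
  have hfeasible : TigrelFeasible M (midpoint ℝ B C) :=
    (convex_setOf_tigrelFeasible M).midpoint_mem hB.1 hC.1
  have hB_le := hB.2 _ hfeasible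
  have hC_le := hC.2 _ hfeasible
  rw [hresidual, frobSq_midpoint] at hB_le hC_le
  have hzero : frobSq (M - M * B - (M - M * C)) = 0 := by
    linarith [frobSq_nonneg (M - M * B - (M - M * C))]
  exact sub_right_injective (sub_eq_zero.mp (frobSq_eq_zero_iff.mp hzero))

end Uniqueness

theorem stmt7_general {m n : ℕ} (M : Matrix (Fin m) (Fin n) ℝ)
    (P : Matrix (Fin n) (Fin n) ℝ) (hP : IsMonomial P) :
    (∀ B : Matrix (Fin n) (Fin n) ℝ,
      TigrelOpt M B ↔ TigrelOpt (M * P) (P⁻¹ * B * P)) ∧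
    ∀ B C : Matrix (Fin n) (Fin n) ℝ, TigrelOpt M B → TigrelOpt (M * P) C →
      (M * P) * (1 - C) = (M * (1 - B)) * P := by
  have hcomm (B : Matrix (Fin n) (Fin n) ℝ) : B * P = P * (P⁻¹ * B * P) := by
    rw [Matrix.mul_assoc P⁻¹, mul_nonsing_inv_cancel_left P _ hP.isUnit_det_s7]
  have hopt (B : Matrix (Fin n) (Fin n) ℝ) :
      TigrelOpt M B ↔ TigrelOpt (M * P) (P⁻¹ * B * P) :=
    (tigrelOpt_mul_iff_of_mul_eq_mul hP (hcomm B)).symm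
  refine ⟨hopt, fun B C hB hC => ?_⟩
  have hunique : M * P * C = M * P * (P⁻¹ * B * P) := hC.mul_eq_mul ((hopt B).mp hB)
  calc M * P * (1 - C) = M * P - M * P * (P⁻¹ * B * P) := by
        rw [Matrix.mul_sub, Matrix.mul_one, hunique]
    _ = M * (1 - B) * P := by
        rw [mul_sub_mul_mul_of_mul_eq_mul (hcomm B), Matrix.mul_sub, Matrix.mul_one]

/-- for a monomial matrix `P`, `B` is optimal for (tigrel) on `M` iff
`P⁻¹BP` is optimal for (tigrel) on `MP`; consequently `P(MP) = P(M)P`. -/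
theorem stmt7 {m n : ℕ} (M : Matrix (Fin m) (Fin n) ℝ) (hM : ∀ i j, 0 ≤ M i j)
    (P : Matrix (Fin n) (Fin n) ℝ) (hP : IsMonomial P) :
    (∀ B : Matrix (Fin n) (Fin n) ℝ,
      TigrelOpt M B ↔ TigrelOpt (M * P) (P⁻¹ * B * P)) ∧
    ∀ B C : Matrix (Fin n) (Fin n) ℝ, TigrelOpt M B → TigrelOpt (M * P) C →
      (M * P) * (1 - C) = (M * (1 - B)) * P :=
  stmt7_general M P hP
end

section
/- Let M ∈ ℝ^{m×n} be entrywise nonnegative and i a column index. Then the i-th column of P(M) is zero if and only if M_{:i} belongs to the convex cone generated by the other columns of M, i.e., if and only if there exist nonnegative coefficients b_k ≥ 0 (k ≠ i) with M_{:i} = Σ_{k≠i} b_k M_{:k}. -/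
open Matrix BigOperators

/-! The squared Frobenius norm is the sum of the squared column norms, and the constraints of
(tigrel) also decouple by columns. Hence each column of an optimal `B` is itself a best admissible
coefficient vector for its own column of `M`. If `M_{:i}` is in the cone of the other columns, then
some admissible vector leaves residual zero, so the optimal one does too. -/

section MulVec

variable {ι κ R : Type*} [Fintype κ] [DecidableEq κ] [CommSemiring R]

theorem mulVec_update_zero_apply (M : Matrix ι κ R) (b : κ → R) (i : κ) (p : ι) :
    (M *ᵥ Function.update b i 0) p = ∑ k ∈ Finset.univ.erase i, b k * M p k := by
  rw [mulVec_eq_sum, Finset.sum_apply, ← Finset.add_sum_erase _ _ (Finset.mem_univ i)]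
  simp only [Function.update_self, Pi.smul_apply, MulOpposite.op_zero, zero_smul, zero_add]
  refine Finset.sum_congr rfl fun k hk => ?_
  rw [Function.update_of_ne (Finset.ne_of_mem_erase hk), op_smul_eq_mul, transpose_apply,
    mul_comm]

theorem exists_nonneg_mulVec_eq_iff_exists_sum_erase [Preorder R] (M : Matrix ι κ R) (i : κ)
    (x : ι → R) :
    (∃ v : κ → R, 0 ≤ v ∧ v i = 0 ∧ M *ᵥ v = x) ↔
      ∃ b : κ → R, (∀ k, 0 ≤ b k) ∧ ∀ p, x p = ∑ k ∈ Finset.univ.erase i, b k * M p k := by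
  constructor
  · rintro ⟨v, hv, hvi, rfl⟩
    refine ⟨v, hv, fun p => ?_⟩
    rw [← mulVec_update_zero_apply, ← hvi, Function.update_eq_self]
  · rintro ⟨b, hb, hx⟩
    refine ⟨Function.update b i 0, ?_, Function.update_self .., ?_⟩
    · exact le_update_iff.mpr ⟨le_rfl, fun k _ => hb k⟩
    · funext p
      rw [mulVec_update_zero_apply, hx]

end MulVec

section Residual

variable {ι κ μ R : Type*} [Fintype κ]

theorem col_mul_one_sub_eq_zero_iff [DecidableEq κ] [NonAssocRing R] (M : Matrix ι κ R)
    (B : Matrix κ κ R) (i : κ) :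
    (M * (1 - B)).col i = 0 ↔ M *ᵥ B.col i = M.col i := by
  rw [Matrix.mul_sub, Matrix.mul_one]
  exact sub_eq_zero.trans eq_comm

theorem sub_mul_updateCol [DecidableEq μ] [NonUnitalNonAssocRing R] (A : Matrix ι μ R)
    (M : Matrix ι κ R) (B : Matrix κ μ R) (i : μ) (v : κ → R) :
    A - M * B.updateCol i v = (A - M * B).updateCol i (A.col i - M *ᵥ v) := by
  ext p j
  rw [mul_updateCol]
  obtain rfl | hj := eq_or_ne j i
  · simp only [Matrix.sub_apply, updateCol_self, Pi.sub_apply, col_apply]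
  · simp only [Matrix.sub_apply, updateCol_ne hj]

end Residual

section Tigrel

variable {m n : ℕ}

theorem frobSq_eq_sum_dotProduct_col (A : Matrix (Fin m) (Fin n) ℝ) :
    frobSq A = ∑ j, A.col j ⬝ᵥ A.col j := by
  simp only [frobSq, dotProduct, col_apply, sq]
  exact Finset.sum_comm

theorem frobSq_le_frobSq_updateCol_iff (A : Matrix (Fin m) (Fin n) ℝ) (i : Fin n)
    (u : Fin m → ℝ) :
    frobSq A ≤ frobSq (A.updateCol i u) ↔ A.col i ⬝ᵥ A.col i ≤ u ⬝ᵥ u := by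
  have col_self : (A.updateCol i u).col i = u := funext fun _ => updateCol_self
  have col_other : ∀ j ∈ Finset.univ.erase i, (A.updateCol i u).col j = A.col j :=
    fun j hj => funext fun _ => updateCol_ne (Finset.ne_of_mem_erase hj)
  have sum_other : ∑ j ∈ Finset.univ.erase i, (A.updateCol i u).col j ⬝ᵥ (A.updateCol i u).col j =
      ∑ j ∈ Finset.univ.erase i, A.col j ⬝ᵥ A.col j :=
    Finset.sum_congr rfl fun j hj => by rw [col_other j hj]
  simp only [frobSq_eq_sum_dotProduct_col, ← Finset.add_sum_erase _ _ (Finset.mem_univ i),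
    col_self, sum_other, add_le_add_iff_right]

variable {M : Matrix (Fin m) (Fin n) ℝ} {B : Matrix (Fin n) (Fin n) ℝ} {i : Fin n}
  {v : Fin n → ℝ}

theorem TigrelFeasible.updateCol (hB : TigrelFeasible M B) (hv : 0 ≤ v) (hvi : v i = 0)
    (hMv : M *ᵥ v ≤ M.col i) : TigrelFeasible M (B.updateCol i v) := by
  obtain ⟨hB_nonneg, hB_diag, hMB⟩ := hB
  refine ⟨fun k j => ?_, fun k => ?_, fun p j => ?_⟩
  · rw [updateCol_apply]
    split_ifs
    exacts [hv k, hB_nonneg k j]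
  · obtain rfl | hk := eq_or_ne k i
    · rw [updateCol_self, hvi]
    · rw [updateCol_ne hk, hB_diag]
  · rw [mul_updateCol]
    obtain rfl | hj := eq_or_ne j i
    · rw [updateCol_self]
      exact hMv p
    · rw [updateCol_ne hj]
      exact hMB p j

theorem TigrelOpt.dotProduct_col_residual_le (hB : TigrelOpt M B) (hv : 0 ≤ v) (hvi : v i = 0)
    (hMv : M *ᵥ v ≤ M.col i) :
    (M.col i - M *ᵥ B.col i) ⬝ᵥ (M.col i - M *ᵥ B.col i) ≤
      (M.col i - M *ᵥ v) ⬝ᵥ (M.col i - M *ᵥ v) := by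
  have hle := hB.2 _ (hB.1.updateCol hv hvi hMv)
  rw [sub_mul_updateCol] at hle
  exact (frobSq_le_frobSq_updateCol_iff ..).mp hle

theorem TigrelOpt.mulVec_col_eq_iff (hB : TigrelOpt M B) (i : Fin n) :
    M *ᵥ B.col i = M.col i ↔ ∃ v : Fin n → ℝ, 0 ≤ v ∧ v i = 0 ∧ M *ᵥ v = M.col i := by
  refine ⟨fun h => ⟨B.col i, fun k => hB.1.1 k i, hB.1.2.1 i, h⟩, ?_⟩
  rintro ⟨v, hv, hvi, hMv⟩
  have hle := hB.dotProduct_col_residual_le hv hvi hMv.le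
  rw [hMv, sub_self, zero_dotProduct] at hle
  have hres : M.col i - M *ᵥ B.col i = 0 :=
    dotProduct_self_eq_zero.mp (hle.antisymm (dotProduct_self_star_nonneg _))
  exact (sub_eq_zero.mp hres).symm

end Tigrel

theorem stmt8_general {m n : ℕ} (M : Matrix (Fin m) (Fin n) ℝ) (i : Fin n)
    (B : Matrix (Fin n) (Fin n) ℝ) (hB : TigrelOpt M B) :
    (fun p => (M * (1 - B) : Matrix (Fin m) (Fin n) ℝ) p i) = 0 ↔
      ∃ b : Fin n → ℝ, (∀ k, 0 ≤ b k) ∧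
        ∀ p, M p i = ∑ k ∈ Finset.univ.erase i, b k * M p k :=
  calc
    (M * (1 - B)).col i = (0 : Fin m → ℝ) ↔ M *ᵥ B.col i = M.col i :=
      col_mul_one_sub_eq_zero_iff M B i
    _ ↔ ∃ v : Fin n → ℝ, 0 ≤ v ∧ v i = 0 ∧ M *ᵥ v = M.col i := hB.mulVec_col_eq_iff i
    _ ↔ _ := exists_nonneg_mulVec_eq_iff_exists_sum_erase M i (M.col i)

/-- the `i`-th column of `P(M)` is zero iff `M_{:i}` lies in the convex
cone generated by the other columns of `M`. -/
theorem stmt8 {m n : ℕ} (M : Matrix (Fin m) (Fin n) ℝ) (hM : ∀ i j, 0 ≤ M i j)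
    (i : Fin n) (B : Matrix (Fin n) (Fin n) ℝ) (hB : TigrelOpt M B) :
    (fun p => (M * (1 - B) : Matrix (Fin m) (Fin n) ℝ) p i) = 0 ↔
      ∃ b : Fin n → ℝ, (∀ k, 0 ≤ b k) ∧
        ∀ p, M p i = ∑ k ∈ Finset.univ.erase i, b k * M p k :=
  stmt8_general M i B hB
end

section
/- Let M ∈ ℝ^{m×n} be entrywise nonnegative such that no column of M is a scalar multiple of another column. Then rank(P(M)) = rank(M) and rank₊(P(M)) ≥ rank₊(M). -/
open Matrix BigOperators

/- Write `c` for the column sums of `M`. If `x (1 - B) ≥ 0` but `x` is not nonnegative, let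
`t < 0` be the least ratio `x j / c j` and `K` the set of indices attaining it. Comparing `x` with
`t • c` shows that no column outside `K` contributes to the columns of `M * B` indexed by `K`, and
that these columns equal those of `M`. So every column of `M` indexed by `K` is a nonnegative
combination of the others in `K`, which is impossible for one spanning an extreme ray of the cone
they generate. Hence `1 - B` has a nonnegative inverse, and multiplying by it on the right turns
nonnegative factorizations of `M * (1 - B)` into nonnegative factorizations of `M`. -/

section MonotoneMatrix

variable {n 𝕜 : Type*} [Field 𝕜] [LinearOrder 𝕜] [IsStrictOrderedRing 𝕜]

theorem exists_neg_smul_le_of_not_nonneg [Finite n] {c x : n → 𝕜} (hc : ∀ j, 0 < c j)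
    (hx : ¬0 ≤ x) : ∃ t < 0, t • c ≤ x ∧ ∃ k, x k = t * c k := by
  cases nonempty_fintype n
  obtain ⟨l, hl⟩ : ∃ l, x l < 0 := by simpa [Pi.le_def] using hx
  obtain ⟨k, -, hk⟩ := Finset.univ.exists_min_image (fun j => x j / c j) ⟨l, Finset.mem_univ l⟩
  refine ⟨x k / c k, ?_, fun j => ?_, k, (div_mul_cancel₀ _ (hc k).ne').symm⟩
  · exact (hk l (Finset.mem_univ l)).trans_lt (div_neg_of_neg_of_pos hl (hc l))
  · exact (le_div_iff₀ (hc j)).1 (hk j (Finset.mem_univ j))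

variable [Fintype n]

/-- Monotone square matrices in the sense of Collatz, stated for the action on row vectors. They are
the invertible matrices with entrywise nonnegative inverse. -/
def IsMonotoneMatrix (A : Matrix n n 𝕜) : Prop :=
  ∀ x : n → 𝕜, 0 ≤ x ᵥ* A → 0 ≤ x

namespace IsMonotoneMatrix

variable [DecidableEq n] {A : Matrix n n 𝕜}

theorem isUnit_det (hA : IsMonotoneMatrix A) : IsUnit A.det := by
  have le_of_vecMul_eq {x y : n → 𝕜} (h : x ᵥ* A = y ᵥ* A) : y ≤ x :=
    sub_nonneg.1 (hA (x - y) (by rw [sub_vecMul, h, sub_self]))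
  have hinj : Function.Injective fun x : n → 𝕜 => x ᵥ* A := fun _ _ h =>
    le_antisymm (le_of_vecMul_eq h.symm) (le_of_vecMul_eq h)
  exact (isUnit_iff_isUnit_det A).1 (vecMul_injective_iff_isUnit.1 hinj)

theorem inv_nonneg (hA : IsMonotoneMatrix A) (i j : n) : 0 ≤ A⁻¹ i j := by
  refine hA (A⁻¹.row i) ?_ j
  have hrow : A⁻¹.row i ᵥ* A = Pi.single i 1 := by
    rw [← single_one_vecMul, vecMul_vecMul, nonsing_inv_mul A hA.isUnit_det, vecMul_one]
  rw [hrow]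
  exact Pi.single_nonneg.2 zero_le_one

end IsMonotoneMatrix

theorem exists_closed_finset_of_vecMul_le {B : Matrix n n 𝕜} {c x : n → 𝕜}
    (hB : ∀ i j, 0 ≤ B i j) (hc : ∀ j, 0 < c j) (hcB : c ᵥ* B ≤ c) (hxB : x ᵥ* B ≤ x)
    (hx : ¬0 ≤ x) :
    ∃ K : Finset n, K.Nonempty ∧ ∀ j ∈ K, (c ᵥ* B) j = c j ∧ ∀ i ∉ K, B i j = 0 := by
  obtain ⟨t, ht, htx, k, hk⟩ := exists_neg_smul_le_of_not_nonneg hc hx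
  let K : Finset n := {j | x j = t * c j}
  refine ⟨K, ⟨k, Finset.mem_filter_univ k |>.2 hk⟩, fun j hj => ?_⟩
  have hxj : x j = t * c j := (Finset.mem_filter_univ j).1 hj
  have hterm (i : n) : 0 ≤ (x i - t * c i) * B i j := mul_nonneg (sub_nonneg.2 (htx i)) (hB i j)
  have hsum : ∑ i, (x i - t * c i) * B i j = (x ᵥ* B) j - t * (c ᵥ* B) j := by
    simp only [vecMul, dotProduct, sub_mul, Finset.sum_sub_distrib, mul_assoc, Finset.mul_sum]
  have hsum_nonneg := Finset.sum_nonneg fun i (_ : i ∈ Finset.univ) => hterm i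
  have hcBj : (c ᵥ* B) j = c j := by
    refine (hcB j).antisymm ((mul_le_mul_left_of_neg ht).1 ?_)
    linarith [hxB j]
  refine ⟨hcBj, fun i hi => ?_⟩
  have hsum_zero : ∑ i, (x i - t * c i) * B i j = 0 := by
    refine hsum_nonneg.antisymm' ?_
    rw [hsum, hcBj]
    linarith [hxB j]
  have hi_zero := (Fintype.sum_eq_zero_iff_of_nonneg hterm).1 hsum_zero
  exact (mul_eq_zero.1 (congrFun hi_zero i)).resolve_left
    fun h => hi ((Finset.mem_filter_univ i).2 (sub_eq_zero.1 h))

end MonotoneMatrix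

section ExtremeRay

variable {E : Type*} [AddCommGroup E] [Module ℝ E] [TopologicalSpace E] [T2Space E]
  [IsTopologicalAddGroup E] [ContinuousSMul ℝ E] [LocallyConvexSpace ℝ E]

theorem exists_mem_notMem_convexHull_sdiff_singleton {s : Set E} (hs : s.Finite)
    (hne : s.Nonempty) : ∃ x ∈ s, x ∉ convexHull ℝ (s \ {x}) := by
  obtain ⟨x, hx⟩ := hs.isCompact_convexHull ℝ |>.extremePoints_nonempty hne.convexHull
  refine ⟨x, extremePoints_convexHull_subset hx, fun hmem => ?_⟩
  refine (((convex_convexHull ℝ s).mem_extremePoints_iff_mem_sdiff_convexHull_sdiff).1 hx).2 ?_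
  exact convexHull_mono (Set.sdiff_subset_sdiff_left (subset_convexHull ℝ s)) hmem

-- Such a `v k` spans an extreme ray of the cone generated by the `v i`.
theorem exists_mem_forall_nonneg_sum_smul_ne {ι : Type*} {K : Finset ι} (hK : K.Nonempty)
    {v : ι → E} {f : E →ₗ[ℝ] ℝ} (hf : ∀ i ∈ K, 0 < f (v i))
    (hv : ∀ i ∈ K, ∀ j ∈ K, i ≠ j → ∀ a : ℝ, v i ≠ a • v j) :
    ∃ k ∈ K, ∀ w : ι → ℝ, (∀ i ∈ K, 0 ≤ w i) → w k = 0 → ∑ i ∈ K, w i • v i ≠ v k := by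
  classical
  -- Scaling the vectors into the hyperplane `f = 1` turns conical combinations into convex ones.
  let y (i : ι) : E := (f (v i))⁻¹ • v i
  have hy {i : ι} (hi : i ∈ K) : f (v i) • y i = v i := smul_inv_smul₀ (hf i hi).ne' (v i)
  obtain ⟨_, ⟨k, hk, rfl⟩, hyk⟩ := exists_mem_notMem_convexHull_sdiff_singleton
    (K.finite_toSet.image y) (hK.to_set.image y)
  have hy_ne (i : ι) (hi : i ∈ K) (hik : i ≠ k) : y i ≠ y k := fun hyik =>
    hv i hi k hk hik (f (v i) * (f (v k))⁻¹) <|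
      calc v i = f (v i) • y k := by rw [← hyik, hy hi]
        _ = (f (v i) * (f (v k))⁻¹) • v k := (mul_smul _ _ _).symm
  refine ⟨k, hk, fun w hw hwk hsum => hyk ?_⟩
  let a (i : ι) : ℝ := (f (v k))⁻¹ * (w i * f (v i))
  have ha_nonneg (i : ι) (hi : i ∈ K) : 0 ≤ a i :=
    mul_nonneg (inv_nonneg.2 (hf k hk).le) (mul_nonneg (hw i hi) (hf i hi).le)
  have hak : a k = 0 := by simp only [a, hwk, zero_mul, mul_zero]
  have ha_sum : ∑ i ∈ K.erase k, a i = 1 := by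
    rw [Finset.sum_erase K hak, ← Finset.mul_sum, inv_mul_eq_one₀ (hf k hk).ne', ← hsum]
    simp only [map_sum, map_smul, smul_eq_mul]
  have hay : ∑ i ∈ K.erase k, a i • y i = y k := by
    rw [Finset.sum_erase K (by rw [hak, zero_smul])]
    calc ∑ i ∈ K, a i • y i = ∑ i ∈ K, (f (v k))⁻¹ • w i • v i :=
          Finset.sum_congr rfl fun i hi => by rw [mul_smul, mul_smul, hy hi]
      _ = y k := by rw [← Finset.smul_sum, hsum]
  refine hay ▸ (convex_convexHull ℝ _).sum_mem
    (fun i hi => ha_nonneg i (Finset.mem_of_mem_erase hi)) ha_sum fun i hi => ?_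
  obtain ⟨hik, hi⟩ := Finset.mem_erase.1 hi
  rw [hay]
  exact subset_convexHull ℝ _ ⟨⟨i, hi, rfl⟩, hy_ne i hi hik⟩

end ExtremeRay

section NonProportionalColumns

variable {m n : Type*} {M : Matrix m n ℝ}

theorem one_vecMul_pos_of_col_ne_smul [Fintype m] [Nontrivial n] (hM : ∀ i j, 0 ≤ M i j)
    (hcol : ∀ i j, i ≠ j → ∀ a : ℝ, M.col i ≠ a • M.col j) (j : n) : 0 < (1 ᵥ* M) j := by
  have hcol_ne : M.col j ≠ 0 := by
    obtain ⟨l, hl⟩ := exists_ne j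
    simpa only [zero_smul] using hcol j l hl.symm 0
  rw [vecMul, one_dotProduct]
  exact Fintype.sum_pos ((Pi.le_def.2 fun i => hM i j).lt_of_ne hcol_ne.symm)

variable [Fintype n] {B : Matrix n n ℝ}

theorem col_mul_eq_of_one_vecMul_eq [Fintype m] (hMB : ∀ i j, (M * B) i j ≤ M i j) {j : n}
    (h : ((1 ᵥ* M) ᵥ* B) j = (1 ᵥ* M) j) : (M * B).col j = M.col j := by
  rw [vecMul_vecMul] at h
  simp only [vecMul, one_dotProduct] at h
  funext i
  exact (Finset.sum_eq_sum_iff_of_le fun i _ => hMB i j).1 h i (Finset.mem_univ i)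

theorem isMonotoneMatrix_one_sub_of_mul_le [Finite m] [DecidableEq n] (hM : ∀ i j, 0 ≤ M i j)
    (hcol : ∀ i j, i ≠ j → ∀ a : ℝ, M.col i ≠ a • M.col j)
    (hB : ∀ i j, 0 ≤ B i j) (hdiag : ∀ i, B i i = 0) (hMB : ∀ i j, (M * B) i j ≤ M i j) :
    IsMonotoneMatrix (1 - B) := by
  cases nonempty_fintype m
  intro x hx
  rw [vecMul_sub, vecMul_one, sub_nonneg] at hx
  cases subsingleton_or_nontrivial n with
  | inl _ =>
    have hB_zero : B = 0 := by
      ext i j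
      rw [Subsingleton.elim i j, hdiag, Matrix.zero_apply]
    simpa only [hB_zero, vecMul_zero] using hx
  | inr _ =>
    by_contra hx_neg
    have hpos := one_vecMul_pos_of_col_ne_smul hM hcol
    have hsum_le : (1 ᵥ* M) ᵥ* B ≤ 1 ᵥ* M := fun j => by
      rw [vecMul_vecMul]
      simp only [vecMul, one_dotProduct]
      exact Finset.sum_le_sum fun i _ => hMB i j
    obtain ⟨K, hK, hclosed⟩ := exists_closed_finset_of_vecMul_le hB hpos hsum_le hx hx_neg
    obtain ⟨k, hk, hne⟩ := exists_mem_forall_nonneg_sum_smul_ne hK (v := M.col)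
      (f := ∑ i, LinearMap.proj i)
      (fun j _ => by simpa [vecMul, one_dotProduct] using hpos j) fun i _ j _ => hcol i j
    refine hne (B.col k) (fun i _ => hB i k) (hdiag k) ?_
    obtain ⟨hsum_eq, hzero⟩ := hclosed k hk
    rw [← col_mul_eq_of_one_vecMul_eq hMB hsum_eq, Finset.sum_subset (Finset.subset_univ K)
      fun i _ hi => by rw [col_apply, hzero i hi, zero_smul]]
    funext p
    simp only [Finset.sum_apply, Pi.smul_apply, smul_eq_mul, col_apply, mul_apply, mul_comm]

end NonProportionalColumns

section NonnegativeRank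

theorem matrix_mul_apply_nonneg_s10 {l m n R : Type*} [Fintype m] [Semiring R] [PartialOrder R]
    [IsOrderedRing R] {U : Matrix l m R} {V : Matrix m n R} (hU : ∀ i j, 0 ≤ U i j)
    (hV : ∀ i j, 0 ≤ V i j) (i : l) (j : n) : 0 ≤ (U * V) i j :=
  dotProduct_nonneg_of_nonneg (fun k => hU i k) fun k => hV k j

variable {m n r k : ℕ}

theorem nnRank_mul_le_of_nonneg {U : Matrix (Fin m) (Fin r) ℝ} {V : Matrix (Fin r) (Fin n) ℝ}
    (hU : ∀ i j, 0 ≤ U i j) (hV : ∀ i j, 0 ≤ V i j) : nnRank (U * V) ≤ r :=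
  Nat.sInf_le ⟨U, V, hU, hV, rfl⟩

theorem exists_nnRank_factorization {M : Matrix (Fin m) (Fin n) ℝ} (hM : ∀ i j, 0 ≤ M i j) :
    ∃ (U : Matrix (Fin m) (Fin (nnRank M)) ℝ) (V : Matrix (Fin (nnRank M)) (Fin n) ℝ),
      (∀ i j, 0 ≤ U i j) ∧ (∀ i j, 0 ≤ V i j) ∧ M = U * V :=
  Nat.sInf_mem (s := {r : ℕ | ∃ (U : Matrix (Fin m) (Fin r) ℝ) (V : Matrix (Fin r) (Fin n) ℝ),
    (∀ i j, 0 ≤ U i j) ∧ (∀ i j, 0 ≤ V i j) ∧ M = U * V})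
    ⟨n, M, 1, hM, fun i j => by rw [one_apply]; split_ifs <;> norm_num, (M.mul_one).symm⟩

theorem nnRank_mul_le_left {M : Matrix (Fin m) (Fin n) ℝ} {C : Matrix (Fin n) (Fin k) ℝ}
    (hM : ∀ i j, 0 ≤ M i j) (hC : ∀ i j, 0 ≤ C i j) : nnRank (M * C) ≤ nnRank M := by
  obtain ⟨U, V, hU, hV, hMUV⟩ := exists_nnRank_factorization hM
  calc nnRank (M * C) = nnRank (U * (V * C)) := by rw [← Matrix.mul_assoc, ← hMUV]
    _ ≤ nnRank M := nnRank_mul_le_of_nonneg hU (matrix_mul_apply_nonneg_s10 hV hC)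

end NonnegativeRank

theorem stmt10_general {m n : ℕ} (M : Matrix (Fin m) (Fin n) ℝ) (hM : ∀ i j, 0 ≤ M i j)
    (hnomult : ∀ i j : Fin n, i ≠ j → ∀ c : ℝ,
      (fun p => M p i) ≠ c • fun p => M p j)
    (B : Matrix (Fin n) (Fin n) ℝ) (hB : TigrelFeasible M B) :
    (M * (1 - B)).rank = M.rank ∧ nnRank M ≤ nnRank (M * (1 - B)) := by
  obtain ⟨hB_nonneg, hdiag, hMB⟩ := hB
  have hmono : IsMonotoneMatrix (1 - B) :=
    isMonotoneMatrix_one_sub_of_mul_le hM hnomult hB_nonneg hdiag hMB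
  have hP_nonneg (i : Fin m) (j : Fin n) : 0 ≤ (M * (1 - B) : Matrix _ _ ℝ) i j := by
    rw [Matrix.mul_sub, Matrix.mul_one, Matrix.sub_apply]
    exact sub_nonneg.2 (hMB i j)
  refine ⟨rank_mul_eq_left_of_isUnit_det _ _ hmono.isUnit_det, ?_⟩
  calc nnRank M = nnRank (M * (1 - B) * (1 - B)⁻¹) := by
        rw [mul_nonsing_inv_cancel_right _ _ hmono.isUnit_det]
    _ ≤ nnRank (M * (1 - B)) := nnRank_mul_le_left hP_nonneg hmono.inv_nonneg

/-- if no column of `M` is a scalar multiple of another, then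
`rank(P(M)) = rank(M)` and `rank₊(P(M)) ≥ rank₊(M)`. -/
theorem stmt10 {m n : ℕ} (M : Matrix (Fin m) (Fin n) ℝ) (hM : ∀ i j, 0 ≤ M i j)
    (hnomult : ∀ i j : Fin n, i ≠ j → ∀ c : ℝ,
      (fun p => M p i) ≠ c • fun p => M p j)
    (B : Matrix (Fin n) (Fin n) ℝ) (hB : TigrelOpt M B) :
    (M * (1 - B)).rank = M.rank ∧ nnRank M ≤ nnRank (M * (1 - B)) :=
  stmt10_general M hM hnomult B hB.1
end

section
/- Let A be an m×n column stochastic matrix (A ≥ 0 entrywise and each column of A sums to one) and let B be an n×n matrix with B ≥ 0 entrywise, B_{ii} = 0 for all i, and AB ≤ A entrywise. Then Σ_k B_{ki} ≤ 1 for every column i, i.e., Q = I − B is diagonally dominant. Moreover, if A_{:i} does not belong to the convex hull of the other columns of A, then Σ_k B_{ki} < 1. -/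
/-!
If every column of `A` sums to one, then `A *ᵥ x` has the same total mass as `x`. Summing the
entries of `A *ᵥ x ≤ A.col i`, where `x` is the `i`-th column of `B`, therefore bounds the mass of
`x` by one. If the inequality between vectors is strict, so is the bound; otherwise `A.col i`
equals `A *ᵥ x`, a convex combination of the columns of `A` indexed by the support of `x`, which
does not contain `i`.
-/

open Matrix BigOperators

section

variable {m n R : Type*} [Fintype m] [Fintype n]

theorem sum_mulVec_of_sum_col_eq_one [NonAssocSemiring R] {A : Matrix m n R}
    (hA : ∀ j, ∑ i, A i j = 1) (x : n → R) : ∑ i, (A *ᵥ x) i = ∑ j, x j :=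
  calc
    ∑ i, (A *ᵥ x) i = ∑ j, ∑ i, A i j * x j := Finset.sum_comm
    _ = ∑ j, x j := by simp only [← Finset.sum_mul, hA, one_mul]

theorem sum_le_sum_of_mulVec_le [NonAssocSemiring R] [PartialOrder R] [IsOrderedAddMonoid R]
    {A : Matrix m n R} (hA : ∀ j, ∑ i, A i j = 1) {x : n → R} {y : m → R} (h : A *ᵥ x ≤ y) :
    ∑ j, x j ≤ ∑ i, y i :=
  (sum_mulVec_of_sum_col_eq_one hA x).symm.trans_le (Fintype.sum_mono h)

theorem sum_lt_sum_of_mulVec_lt [NonAssocSemiring R] [PartialOrder R]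
    [IsOrderedCancelAddMonoid R] {A : Matrix m n R} (hA : ∀ j, ∑ i, A i j = 1)
    {x : n → R} {y : m → R} (h : A *ᵥ x < y) : ∑ j, x j < ∑ i, y i :=
  (sum_mulVec_of_sum_col_eq_one hA x).symm.trans_lt (Fintype.sum_strictMono h)

end

section

variable {m n 𝕜 : Type*} [Fintype n] [Field 𝕜] [LinearOrder 𝕜] [IsStrictOrderedRing 𝕜]

theorem mulVec_mem_convexHull_col_image_support (A : Matrix m n 𝕜) {x : n → 𝕜} (hx : 0 ≤ x)
    (hsum : ∑ j, x j = 1) : A *ᵥ x ∈ convexHull 𝕜 (A.col '' Function.support x) := by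
  have hcomb : A *ᵥ x = ∑ᶠ j, x j • A.col j := by
    simp only [finsum_eq_sum_of_fintype, mulVec_eq_sum, op_smul_eq_smul, Matrix.col]
  rw [hcomb]
  exact (convex_convexHull 𝕜 _).finsum_mem hx ((finsum_eq_sum_of_fintype x).trans hsum)
    fun j hj => subset_convexHull 𝕜 _ (Set.mem_image_of_mem A.col hj)

theorem sum_lt_one_of_col_notMem_convexHull [Fintype m] {A : Matrix m n 𝕜}
    (hA : ∀ j, ∑ i, A i j = 1) {x : n → 𝕜} (hx : 0 ≤ x) {i : n} (hxi : x i = 0)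
    (hle : A *ᵥ x ≤ A.col i) (hi : A.col i ∉ convexHull 𝕜 (A.col '' {i}ᶜ)) :
    ∑ j, x j < 1 := by
  have hne : A *ᵥ x ≠ A.col i := by
    intro heq
    have hsum : ∑ j, x j = 1 := by
      rw [← sum_mulVec_of_sum_col_eq_one hA, heq]
      exact hA i
    have hsupp : Function.support x ⊆ {i}ᶜ :=
      Set.subset_compl_singleton_iff.2 (Function.notMem_support.2 hxi)
    exact hi (heq ▸ convexHull_mono (Set.image_mono hsupp)
      (mulVec_mem_convexHull_col_image_support A hx hsum))
  exact (sum_lt_sum_of_mulVec_lt hA (hle.lt_of_ne hne)).trans_eq (hA i)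

theorem stmt11_general [Fintype m] (A : Matrix m n 𝕜) (hstoch : ∀ j, ∑ i, A i j = 1)
    (B : Matrix n n 𝕜) (hB : ∀ i j, 0 ≤ B i j) (hdiag : ∀ i, B i i = 0)
    (hAB : ∀ i j, (A * B) i j ≤ A i j) :
    (∀ i, ∑ k, B k i ≤ 1) ∧
    ∀ i, A.col i ∉ convexHull 𝕜 (A.col '' {i}ᶜ) → ∑ k, B k i < 1 := by
  have hcol (i : n) : A *ᵥ B.col i ≤ A.col i := fun p => hAB p i
  exact ⟨fun i => (sum_le_sum_of_mulVec_le hstoch (hcol i)).trans_eq (hstoch i),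
    fun i => sum_lt_one_of_col_notMem_convexHull hstoch (fun k => hB k i) (hdiag i) (hcol i)⟩

end

/-- for column stochastic `A` and `B ≥ 0` with zero diagonal and
`AB ≤ A`, every column sum of `B` is at most one; it is strictly less than one for
columns `i` with `A_{:i}` outside the convex hull of the other columns. -/
theorem stmt11 {m n : ℕ} (A : Matrix (Fin m) (Fin n) ℝ)
    (hA : ∀ i j, 0 ≤ A i j) (hstoch : ∀ j, ∑ i, A i j = 1)
    (B : Matrix (Fin n) (Fin n) ℝ) (hB : ∀ i j, 0 ≤ B i j)
    (hdiag : ∀ i, B i i = 0) (hAB : ∀ i j, (A * B) i j ≤ A i j) :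
    (∀ i, ∑ k, B k i ≤ 1) ∧
    ∀ i : Fin n, (fun p => A p i) ∉
        convexHull ℝ {x : Fin m → ℝ | ∃ k : Fin n, k ≠ i ∧ x = fun p => A p k} →
      ∑ k, B k i < 1 := by
  simp only [eq_comm (b := fun p => A p _)]
  exact stmt11_general A hstoch B hB hdiag hAB
end
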